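/- arXiv:2005.03107 — 3 statements merged into one kernel-verified Lean document; each statement's English description precedes it below -/
import Mathlib

section
/- The subgroup W_n generated by β' and the scalar matrix ζ·I is a normal subgroup of the group V_n' generated by α' and β' inside the unitary group U_n. -/
/-!
The proof rests on the relation `β'α' = ζ·α'β'` (`bU_mul_aU`). It exhibits the central element
`ζ·I` as a commutator of `β'` and `α'`, so `W_n ≤ V_n'`, and it gives
`α'β'α'⁻¹ = ζ⁻¹β'` and `α'⁻¹β'α' = ζβ'`, so `α'` normalizes `W_n`. As `β' ∈ W_n`, both generators
of `V_n'` lie in the normalizer of `W_n`.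
-/

open Matrix Complex

/-- `ζ = exp(2πi/n)`. -/
noncomputable def zetaC (n : ℕ) : ℂ := Complex.exp (2 * Real.pi * Complex.I / n)

/-- The cyclic permutation matrix `α'`, with `α'_{ij} = 1` iff `i ≡ j + 1 (mod n)`. -/
noncomputable def alphaM (n : ℕ) : Matrix (Fin n) (Fin n) ℂ :=
  fun i j => if (i : ℕ) = ((j : ℕ) + 1) % n then 1 else 0

/-- The diagonal matrix `β' = diag(ζ, ζ², …, ζ^{n−1}, 1)`. -/
noncomputable def betaM (n : ℕ) : Matrix (Fin n) (Fin n) ℂ :=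
  Matrix.diagonal fun i => zetaC n ^ ((i : ℕ) + 1)

/-- `α'` as an element of the unitary group. -/
noncomputable def aU (n : ℕ) (hA : alphaM n ∈ Matrix.unitaryGroup (Fin n) ℂ) :
    Matrix.unitaryGroup (Fin n) ℂ := ⟨alphaM n, hA⟩

/-- `β'` as an element of the unitary group. -/
noncomputable def bU (n : ℕ) (hB : betaM n ∈ Matrix.unitaryGroup (Fin n) ℂ) :
    Matrix.unitaryGroup (Fin n) ℂ := ⟨betaM n, hB⟩

/-- The scalar matrix `ζ·I` as an element of the unitary group. -/
noncomputable def sU (n : ℕ)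
    (hS : zetaC n • (1 : Matrix (Fin n) (Fin n) ℂ) ∈ Matrix.unitaryGroup (Fin n) ℂ) :
    Matrix.unitaryGroup (Fin n) ℂ := ⟨zetaC n • (1 : Matrix (Fin n) (Fin n) ℂ), hS⟩

/-- `V_n'`, the subgroup of `U_n` generated by `α'` and `β'`. -/
noncomputable def Vgrp (n : ℕ) (hA : alphaM n ∈ Matrix.unitaryGroup (Fin n) ℂ)
    (hB : betaM n ∈ Matrix.unitaryGroup (Fin n) ℂ) :
    Subgroup (Matrix.unitaryGroup (Fin n) ℂ) :=
  Subgroup.closure {aU n hA, bU n hB}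

/-- `W_n`, the subgroup of `U_n` generated by `β'` and the scalar matrix `ζ·I`. -/
noncomputable def Wgrp (n : ℕ) (hB : betaM n ∈ Matrix.unitaryGroup (Fin n) ℂ)
    (hS : zetaC n • (1 : Matrix (Fin n) (Fin n) ℂ) ∈ Matrix.unitaryGroup (Fin n) ℂ) :
    Subgroup (Matrix.unitaryGroup (Fin n) ℂ) :=
  Subgroup.closure {bU n hB, sU n hS}

/-- The commutation relation `β'α' = ζ·α'β'`. In the wrap-around entry it uses `ζ ^ n = 1`. -/
theorem bU_mul_aU (n : ℕ) (hn : 1 < n)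
    (hA : alphaM n ∈ Matrix.unitaryGroup (Fin n) ℂ)
    (hB : betaM n ∈ Matrix.unitaryGroup (Fin n) ℂ)
    (hS : zetaC n • (1 : Matrix (Fin n) (Fin n) ℂ) ∈ Matrix.unitaryGroup (Fin n) ℂ) :
    bU n hB * aU n hA = sU n hS * (aU n hA * bU n hB) := by
  have hz : zetaC n ^ n = 1 :=
    (Complex.isPrimitiveRoot_exp n (by omega)).pow_eq_one
  apply Subtype.ext
  change betaM n * alphaM n =
    (zetaC n • (1 : Matrix (Fin n) (Fin n) ℂ)) * (alphaM n * betaM n)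
  ext i j
  rw [smul_mul_assoc, one_mul, Matrix.smul_apply, betaM, Matrix.diagonal_mul,
    Matrix.mul_diagonal, alphaM, smul_eq_mul]
  split_ifs with h
  · have hmod : zetaC n ^ (((j : ℕ) + 1) % n) = zetaC n ^ ((j : ℕ) + 1) :=
      (pow_eq_pow_mod _ hz).symm
    rw [pow_succ, h, hmod]
    ring
  · simp

theorem sU_comm (n : ℕ)
    (hS : zetaC n • (1 : Matrix (Fin n) (Fin n) ℂ) ∈ Matrix.unitaryGroup (Fin n) ℂ)
    (g : Matrix.unitaryGroup (Fin n) ℂ) : sU n hS * g = g * sU n hS := by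
  apply Subtype.ext
  change (zetaC n • (1 : Matrix (Fin n) (Fin n) ℂ)) * g.1 =
    g.1 * (zetaC n • (1 : Matrix (Fin n) (Fin n) ℂ))
  simp

/-- A group element that conjugates a generating set into the generated subgroup, and whose
inverse does so too, normalizes that subgroup. -/
theorem mem_normalizer_closure_of_conj {G : Type*} [Group G] {S : Set G} {g : G}
    (h₁ : ∀ x ∈ S, g * x * g⁻¹ ∈ Subgroup.closure S)
    (h₂ : ∀ x ∈ S, g⁻¹ * x * g ∈ Subgroup.closure S) :
    g ∈ Subgroup.normalizer (Subgroup.closure S : Set G) := by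
  have k₁ : Subgroup.closure S ≤ (Subgroup.closure S).comap (MulAut.conj g).toMonoidHom :=
    (Subgroup.closure_le _).2 fun x hx => by simpa using h₁ x hx
  have k₂ : Subgroup.closure S ≤ (Subgroup.closure S).comap (MulAut.conj g⁻¹).toMonoidHom :=
    (Subgroup.closure_le _).2 fun x hx => by simpa using h₂ x hx
  rw [Subgroup.mem_normalizer_iff]
  intro x
  refine ⟨fun hx => by simpa using k₁ hx, fun hx => ?_⟩
  have := k₂ hx
  simpa [mul_assoc] using this

/-- `W_n` is a normal subgroup of `V_n'`. -/
theorem Wgrp_normal_in_Vgrp (n : ℕ) (hn : 1 < n)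
    (hA : alphaM n ∈ Matrix.unitaryGroup (Fin n) ℂ)
    (hB : betaM n ∈ Matrix.unitaryGroup (Fin n) ℂ)
    (hS : zetaC n • (1 : Matrix (Fin n) (Fin n) ℂ) ∈ Matrix.unitaryGroup (Fin n) ℂ) :
    Wgrp n hB hS ≤ Vgrp n hA hB ∧
    ((Wgrp n hB hS).subgroupOf (Vgrp n hA hB)).Normal := by
  have rel := bU_mul_aU n hn hA hB hS
  have comm := sU_comm n hS
  have hWV : Wgrp n hB hS ≤ Vgrp n hA hB := by
    have ha : aU n hA ∈ Vgrp n hA hB := Subgroup.subset_closure (by simp)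
    have hb : bU n hB ∈ Vgrp n hA hB := Subgroup.subset_closure (by simp)
    refine (Subgroup.closure_le _).2 ?_
    rintro x (rfl | rfl)
    · exact hb
    · have : sU n hS = bU n hB * aU n hA * (aU n hA * bU n hB)⁻¹ := by
        rw [rel, mul_inv_cancel_right]
      rw [this]
      exact mul_mem (mul_mem hb ha) (inv_mem (mul_mem ha hb))
  refine ⟨hWV, (Subgroup.normal_subgroupOf_iff_le_normalizer hWV).2 ?_⟩
  have hb : bU n hB ∈ Wgrp n hB hS := Subgroup.subset_closure (by simp)
  have hs : sU n hS ∈ Wgrp n hB hS := Subgroup.subset_closure (by simp)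
  refine (Subgroup.closure_le _).2 ?_
  rintro g (rfl | rfl)
  · refine mem_normalizer_closure_of_conj ?_ ?_
    · rintro x (rfl | rfl)
      · have : aU n hA * bU n hB * (aU n hA)⁻¹ = (sU n hS)⁻¹ * bU n hB := by
          rw [mul_inv_eq_iff_eq_mul, mul_assoc, rel, inv_mul_cancel_left]
        rw [this]
        exact mul_mem (inv_mem hs) hb
      · rw [← comm, mul_inv_cancel_right]
        exact hs
    · rintro x (rfl | rfl)
      · have : (aU n hA)⁻¹ * bU n hB * aU n hA = sU n hS * bU n hB := by
          rw [mul_assoc, inv_mul_eq_iff_eq_mul, rel, ← mul_assoc, comm, mul_assoc]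
        rw [this]
        exact mul_mem hs hb
      · rw [mul_assoc, comm, inv_mul_cancel_left]
        exact hs
  · exact Subgroup.le_normalizer hb
end

section
/- The quotient group V_n'/W_n is cyclic of order n; it is isomorphic to ℤ/n, generated by the class of α'. -/
/-!
The class of `β'` in `V_n'/W_n` is trivial, so the quotient is generated by the class of `α'`
(`quotient_mem_zpowers`). It remains to see that this class has order exactly `n`: the power
`α'^k` is the permutation matrix of `j ↦ j + k` (`alphaM_pow_apply`), so `α'^n = 1`, while every
element of `W_n` is a diagonal matrix (`isDiag_of_mem_Wgrp`), which forces `n ∣ k` whenever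
`α'^k ∈ W_n`. Two cyclic groups of the same order are isomorphic by matching given generators.
-/

open Matrix Complex

lemma alphaM_pow_apply (n k : ℕ) (i j : Fin n) :
    (alphaM n ^ k) i j = if (i : ℕ) = ((j : ℕ) + k) % n then 1 else 0 := by
  induction k generalizing i j with
  | zero => simp [Matrix.one_apply, Fin.ext_iff, Nat.mod_eq_of_lt j.2]
  | succ k ih =>
    have hpos : 0 < n := j.pos
    rw [pow_succ, Matrix.mul_apply,
      Finset.sum_eq_single (⟨((j : ℕ) + 1) % n, Nat.mod_lt _ hpos⟩ : Fin n)]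
    · rw [ih]
      simp [alphaM, add_assoc, add_comm 1 k]
    · intro l _ hl
      have : (l : ℕ) ≠ ((j : ℕ) + 1) % n := fun h => hl (Fin.ext h)
      simp [alphaM, this]
    · simp

lemma isDiag_of_mem_Wgrp (n : ℕ) (hB : betaM n ∈ Matrix.unitaryGroup (Fin n) ℂ)
    (hS : zetaC n • (1 : Matrix (Fin n) (Fin n) ℂ) ∈ Matrix.unitaryGroup (Fin n) ℂ)
    (x : Matrix.unitaryGroup (Fin n) ℂ) (hx : x ∈ Wgrp n hB hS) :
    (x : Matrix (Fin n) (Fin n) ℂ).IsDiag := by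
  unfold Wgrp at hx
  induction hx using Subgroup.closure_induction with
  | mem x hx =>
    rcases hx with rfl | rfl
    · exact Matrix.isDiag_diagonal _
    · exact Matrix.isDiag_one.smul _
  | one => exact Matrix.isDiag_one
  | mul x y _ _ hx hy =>
    rw [Matrix.UnitaryGroup.mul_val, ← hx.diagonal_diag, ← hy.diagonal_diag,
      Matrix.diagonal_mul_diagonal]
    exact Matrix.isDiag_diagonal _
  | inv x _ hx =>
    rw [Matrix.UnitaryGroup.inv_val]
    exact hx.conjTranspose

lemma aU_pow_mem_Wgrp_iff (n : ℕ) (hn : 1 < n)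
    (hA : alphaM n ∈ Matrix.unitaryGroup (Fin n) ℂ)
    (hB : betaM n ∈ Matrix.unitaryGroup (Fin n) ℂ)
    (hS : zetaC n • (1 : Matrix (Fin n) (Fin n) ℂ) ∈ Matrix.unitaryGroup (Fin n) ℂ) (k : ℕ) :
    aU n hA ^ k ∈ Wgrp n hB hS ↔ n ∣ k := by
  have hval : ((aU n hA ^ k : Matrix.unitaryGroup (Fin n) ℂ) : Matrix (Fin n) (Fin n) ℂ)
      = alphaM n ^ k := rfl
  constructor
  · intro h
    have hd := isDiag_of_mem_Wgrp n hB hS _ h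
    rw [hval] at hd
    by_contra hk
    -- The entry of `α'^k` in column `0` and row `k mod n` is `1`, hence lies on the diagonal.
    have hne : (⟨k % n, Nat.mod_lt _ (by omega)⟩ : Fin n) ≠ ⟨0, by omega⟩ := by
      intro h0
      exact hk (Nat.dvd_of_mod_eq_zero (congrArg Fin.val h0))
    have := hd hne
    simp [alphaM_pow_apply] at this
  · intro h
    have : aU n hA ^ k = 1 := by
      apply Subtype.ext
      rw [hval]
      ext i j
      obtain ⟨m, rfl⟩ := h
      simp [alphaM_pow_apply, Matrix.one_apply, Fin.ext_iff, Nat.mod_eq_of_lt j.2]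
    rw [this]
    exact one_mem _

/-- The class of `α'` generates the quotient, because the other generator `β'` of `V_n'` lies
in `W_n`. -/
lemma quotient_mem_zpowers (n : ℕ)
    (hA : alphaM n ∈ Matrix.unitaryGroup (Fin n) ℂ)
    (hB : betaM n ∈ Matrix.unitaryGroup (Fin n) ℂ)
    (hS : zetaC n • (1 : Matrix (Fin n) (Fin n) ℂ) ∈ Matrix.unitaryGroup (Fin n) ℂ)
    [hN : ((Wgrp n hB hS).subgroupOf (Vgrp n hA hB)).Normal]
    (q : Vgrp n hA hB ⧸ (Wgrp n hB hS).subgroupOf (Vgrp n hA hB)) :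
    q ∈ Subgroup.zpowers (QuotientGroup.mk
      (⟨aU n hA, Subgroup.subset_closure (Set.mem_insert _ _)⟩ : Vgrp n hA hB) :
        Vgrp n hA hB ⧸ (Wgrp n hB hS).subgroupOf (Vgrp n hA hB)) := by
  obtain ⟨⟨x, hx⟩, rfl⟩ := QuotientGroup.mk_surjective q
  have hx' := hx
  unfold Vgrp at hx'
  induction hx' using Subgroup.closure_induction with
  | mem x hgen =>
    rcases hgen with rfl | rfl
    · exact Subgroup.mem_zpowers _
    · have hb : (QuotientGroup.mk (⟨bU n hB, hx⟩ : Vgrp n hA hB) :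
          Vgrp n hA hB ⧸ (Wgrp n hB hS).subgroupOf (Vgrp n hA hB)) = 1 :=
        (QuotientGroup.eq_one_iff _).2
          (Subgroup.mem_subgroupOf.2 (Subgroup.subset_closure (Set.mem_insert _ _)))
      rw [hb]
      exact one_mem _
  | one => exact one_mem _
  | mul x y hx1 hy1 ihx ihy => exact mul_mem (ihx hx1) (ihy hy1)
  | inv x hx1 ihx => exact inv_mem (ihx hx1)

/-- the quotient `V_n'/W_n` is cyclic of order `n`, isomorphic to `ℤ/n` with the
class of `α'` mapping to the generator. -/
theorem Vgrp_quotient_Wgrp_iso (n : ℕ) (hn : 1 < n)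
    (hA : alphaM n ∈ Matrix.unitaryGroup (Fin n) ℂ)
    (hB : betaM n ∈ Matrix.unitaryGroup (Fin n) ℂ)
    (hS : zetaC n • (1 : Matrix (Fin n) (Fin n) ℂ) ∈ Matrix.unitaryGroup (Fin n) ℂ)
    [hN : ((Wgrp n hB hS).subgroupOf (Vgrp n hA hB)).Normal] :
    ∃ e : (Vgrp n hA hB ⧸ (Wgrp n hB hS).subgroupOf (Vgrp n hA hB)) ≃*
        Multiplicative (ZMod n),
      e (QuotientGroup.mk
          (⟨aU n hA, Subgroup.subset_closure (Set.mem_insert _ _)⟩ : Vgrp n hA hB)) =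
        Multiplicative.ofAdd (1 : ZMod n) := by
  set g : Vgrp n hA hB ⧸ (Wgrp n hB hS).subgroupOf (Vgrp n hA hB) := QuotientGroup.mk
    (⟨aU n hA, Subgroup.subset_closure (Set.mem_insert _ _)⟩ : Vgrp n hA hB) with hg
  have hpow : ∀ k : ℕ, g ^ k = 1 ↔ n ∣ k := by
    intro k
    rw [hg, ← QuotientGroup.mk_pow, QuotientGroup.eq_one_iff, Subgroup.mem_subgroupOf]
    exact aU_pow_mem_Wgrp_iff n hn hA hB hS k
  have hord : orderOf g = n :=
    Nat.dvd_antisymm (orderOf_dvd_of_pow_eq_one ((hpow n).2 dvd_rfl))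
      ((hpow _).1 (pow_orderOf_eq_one g))
  have hgen : ∀ y : Multiplicative (ZMod n),
      y ∈ Subgroup.zpowers (Multiplicative.ofAdd (1 : ZMod n)) := by
    intro y
    obtain ⟨m, hm⟩ := ZMod.intCast_surjective y.toAdd
    refine ⟨m, ?_⟩
    apply Multiplicative.toAdd.injective
    simp [hm]
  have hord' : orderOf (Multiplicative.ofAdd (1 : ZMod n)) = n := by
    rw [orderOf_ofAdd_eq_addOrderOf, ZMod.addOrderOf_one]
  exact ⟨mulEquivOfOrderOfEq (quotient_mem_zpowers n hA hB hS) hgen (hord.trans hord'.symm),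
    mulEquivOfOrderOfEq_apply_gen _ _ _⟩
end

section
/- The commutator subgroup of V_n' is the cyclic subgroup generated by the scalar matrix ζ·I; in particular, the commutator subgroup of V_n' is cyclic of order n. -/
/-!
The relation `β' α' = (ζ·I) α' β'` holds entrywise (`betaM_mul_alphaM`), and `ζ·I` is central in
`U_n`. Hence `ζ·I` is the commutator of `β'` and `α'`, so it lies in the commutator subgroup of
`V_n'`. Conversely, modulo the central subgroup `⟨ζ·I⟩` the two generators commute,
so the image of `V_n'` in the quotient is abelian and every commutator lies in `⟨ζ·I⟩`
(`commutator_closure_pair_of_central`). The order of `ζ·I` is that of `ζ`, a primitive `n`-th root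
of unity.
-/

open Matrix Complex

open scoped commutatorElement in
/-- If `b` and `a` commute up to a factor `s` central in the ambient group, the commutator
subgroup of `⟨a, b⟩` is `⟨s⟩`: modulo the normal subgroup `⟨s⟩` the two generators commute. -/
theorem commutator_closure_pair_of_central {G : Type*} [Group G] (a b s : G)
    (hs : ∀ g : G, g * s = s * g) (hab : b * a = s * (a * b)) :
    ∃ h : s ∈ Subgroup.closure ({a, b} : Set G),
      commutator (Subgroup.closure ({a, b} : Set G)) =
        Subgroup.zpowers (⟨s, h⟩ : Subgroup.closure ({a, b} : Set G)) := by
  have ha : a ∈ Subgroup.closure ({a, b} : Set G) := Subgroup.subset_closure (by simp)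
  have hb : b ∈ Subgroup.closure ({a, b} : Set G) := Subgroup.subset_closure (by simp)
  have hcomm : s = ⁅b, a⁆ := by
    rw [commutatorElement_def, hab]; group
  have h : s ∈ Subgroup.closure ({a, b} : Set G) := by
    rw [hcomm, commutatorElement_def]
    exact mul_mem (mul_mem (mul_mem hb ha) (inv_mem hb)) (inv_mem ha)
  refine ⟨h, le_antisymm ?_ ?_⟩
  · have hN : (Subgroup.zpowers s).Normal := by
      refine ⟨fun x hx g => ?_⟩
      obtain ⟨k, rfl⟩ := Subgroup.mem_zpowers_iff.1 hx
      have hc : Commute g (s ^ k) := Commute.zpow_right (hs g) k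
      rw [hc.eq, mul_inv_cancel_right]
      exact hx
    let f : G →* G ⧸ Subgroup.zpowers s := QuotientGroup.mk' _
    have hf : ∀ g, f g = 1 ↔ g ∈ Subgroup.zpowers s := fun g => QuotientGroup.eq_one_iff g
    have hfab : f b * f a = f a * f b := by
      rw [← map_mul, hab, map_mul, (hf s).2 (Subgroup.mem_zpowers s), one_mul, map_mul]
    have hmap : ∀ x ∈ Subgroup.closure ({a, b} : Set G),
        ∀ y ∈ Subgroup.closure ({a, b} : Set G), Commute (f x) (f y) := by
      intro x hx y hy
      induction hx, hy using Subgroup.closure_induction₂ with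
      | mem x y hx hy =>
        rcases hx with rfl | rfl <;> rcases hy with rfl | rfl
        · exact Commute.refl _
        · exact hfab.symm
        · exact hfab
        · exact Commute.refl _
      | one_left => simp
      | one_right => simp
      | mul_left x y z _ _ _ h1 h2 => rw [map_mul]; exact h1.mul_left h2
      | mul_right x y z _ _ _ h1 h2 => rw [map_mul]; exact h1.mul_right h2
      | inv_left x y _ _ h1 => rw [map_inv]; exact h1.inv_left
      | inv_right x y _ _ h1 => rw [map_inv]; exact h1.inv_right
    rw [commutator_def, Subgroup.commutator_le]
    rintro ⟨x, hx⟩ - ⟨y, hy⟩ -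
    have hxy : ⁅x, y⁆ ∈ Subgroup.zpowers s := by
      rw [← hf, map_commutatorElement, commutatorElement_eq_one_iff_commute]
      exact hmap x hx y hy
    obtain ⟨k, hk⟩ := Subgroup.mem_zpowers_iff.1 hxy
    exact Subgroup.mem_zpowers_iff.2 ⟨k, Subtype.ext hk⟩
  · rw [Subgroup.zpowers_le]
    have hsub : (⟨s, h⟩ : Subgroup.closure ({a, b} : Set G)) =
        ⁅(⟨b, hb⟩ : Subgroup.closure ({a, b} : Set G)), ⟨a, ha⟩⁆ :=
      Subtype.ext hcomm
    rw [hsub]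
    exact Subgroup.commutator_mem_commutator (Subgroup.mem_top _) (Subgroup.mem_top _)

theorem zetaC_isPrimitiveRoot (n : ℕ) (hn : n ≠ 0) : IsPrimitiveRoot (zetaC n) n :=
  Complex.isPrimitiveRoot_exp n hn

/-- The entry of `α'` at `(i, j)` is nonzero only when `i ≡ j + 1`, and there `β'` contributes
`ζ^(i+1) = ζ · ζ^(j+1)`; the wrap-around `i = 0`, `j = n - 1` uses `ζ^n = 1`. -/
theorem betaM_mul_alphaM (n : ℕ) (hn : n ≠ 0) :
    betaM n * alphaM n = zetaC n • (alphaM n * betaM n) := by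
  ext i j
  rw [betaM, Matrix.diagonal_mul, Matrix.smul_apply, Matrix.mul_diagonal, alphaM]
  split_ifs with h
  · have hmod : zetaC n ^ (i : ℕ) = zetaC n ^ ((j : ℕ) + 1) := by
      rw [h, ← pow_eq_pow_mod _ (zetaC_isPrimitiveRoot n hn).pow_eq_one]
    rw [pow_succ, hmod, smul_eq_mul]
    ring
  · simp

/-- the commutator subgroup of `V_n'` is the cyclic subgroup generated by the
scalar matrix `ζ·I`; in particular it is cyclic of order `n`. -/
theorem commutator_Vgrp_eq (n : ℕ) (hn : 1 < n)
    (hA : alphaM n ∈ Matrix.unitaryGroup (Fin n) ℂ)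
    (hB : betaM n ∈ Matrix.unitaryGroup (Fin n) ℂ)
    (hS : zetaC n • (1 : Matrix (Fin n) (Fin n) ℂ) ∈ Matrix.unitaryGroup (Fin n) ℂ) :
    ∃ hsV : sU n hS ∈ Vgrp n hA hB,
      commutator (Vgrp n hA hB) = Subgroup.zpowers (⟨sU n hS, hsV⟩ : Vgrp n hA hB) ∧
      orderOf (⟨sU n hS, hsV⟩ : Vgrp n hA hB) = n := by
  have hn0 : n ≠ 0 := by omega
  have hcentral : ∀ g : Matrix.unitaryGroup (Fin n) ℂ, g * sU n hS = sU n hS * g := by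
    intro g
    apply Subtype.ext
    change (g : Matrix (Fin n) (Fin n) ℂ) * (zetaC n • 1) = (zetaC n • 1) * g
    simp
  have hrel : bU n hB * aU n hA = sU n hS * (aU n hA * bU n hB) := by
    apply Subtype.ext
    change betaM n * alphaM n = (zetaC n • 1) * (alphaM n * betaM n)
    rw [betaM_mul_alphaM n hn0, smul_mul_assoc, one_mul]
  obtain ⟨hsV, hcomm⟩ :=
    commutator_closure_pair_of_central (aU n hA) (bU n hB) (sU n hS) hcentral hrel
  have hsV' : sU n hS ∈ Vgrp n hA hB := hsV
  refine ⟨hsV', hcomm, ?_⟩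
  rw [Subgroup.orderOf_mk]
  have : Nonempty (Fin n) := ⟨⟨0, by omega⟩⟩
  -- The order is read off in `ℂ`, which embeds in the matrix algebra as the scalar matrices.
  have hinj : Function.Injective (algebraMap ℂ (Matrix (Fin n) (Fin n) ℂ)) :=
    FaithfulSMul.algebraMap_injective _ _
  have hval : ((sU n hS : Matrix.unitaryGroup (Fin n) ℂ) : Matrix (Fin n) (Fin n) ℂ) =
      algebraMap ℂ (Matrix (Fin n) (Fin n) ℂ) (zetaC n) :=
    (Algebra.algebraMap_eq_smul_one _).symm
  rw [← orderOf_submonoid, hval]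
  exact (orderOf_injective (algebraMap ℂ (Matrix (Fin n) (Fin n) ℂ)).toMonoidHom hinj _).trans
    (zetaC_isPrimitiveRoot n hn0).eq_orderOf.symm
end
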